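/- Let Φ : ℂⁿ → ℝ be a strictly plurisubharmonic quadratic form and let s ∈ ℝ. For every v ∈ H^{-s}_Φ(ℂⁿ) the formula ψ_v(u) = ∫_{ℂⁿ} u(z) \overline{v(z)} e^{-2Φ(z)} dL(z), u ∈ H^s_Φ(ℂⁿ), defines a continuous linear functional on H^s_Φ(ℂⁿ) with operator norm ‖ψ_v‖ ≤ ‖v‖_{-s}, and the map v ↦ ψ_v is a bounded conjugate-linear bijection from H^{-s}_Φ(ℂⁿ) onto the continuous dual space of H^s_Φ(ℂⁿ). -/

import Mathlib

open Matrix MeasureTheory ENNReal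

noncomputable section

/-- The squared Euclidean norm `|z|²` on `ℂⁿ`. -/
def eSq {n : ℕ} (z : Fin n → ℂ) : ℝ := ∑ i, Complex.normSq (z i)

/-- The Japanese bracket `⟨z⟩ = (1 + |z|²)^{1/2}`. -/
def jb {n : ℕ} (z : Fin n → ℂ) : ℝ := Real.sqrt (1 + eSq z)

/-- `Φ : ℂⁿ → ℝ` is a (real) quadratic form of the underlying real coordinates. -/
def IsRQuad {n : ℕ} (Φ : (Fin n → ℂ) → ℝ) : Prop :=
  ∃ B : (Fin n → ℂ) →ₗ[ℝ] (Fin n → ℂ) →ₗ[ℝ] ℝ, ∀ z, Φ z = B z z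

/-- `Φ : ℂⁿ → ℝ` is a strictly plurisubharmonic quadratic form.  For a quadratic form `Φ`,
the Levi form satisfies `(∂²_{z z̄}Φ) w ⋅ w̄ = (Φ(w) + Φ(i w))/2`, so positive definiteness of
the Levi matrix is equivalent to `Φ(w) + Φ(i·w) > 0` for all `w ≠ 0`. -/
def IsSPSH {n : ℕ} (Φ : (Fin n → ℂ) → ℝ) : Prop :=
  IsRQuad Φ ∧ ∀ z : Fin n → ℂ, z ≠ 0 → 0 < Φ z + Φ (Complex.I • z)

/-- The squared weighted norm `‖u‖_s² = ∫ |u(z)|² ⟨z⟩^{2s} e^{-2Φ(z)} L(dz)` (in `ℝ≥0∞`). -/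
def hnorm {n : ℕ} (Φ : (Fin n → ℂ) → ℝ) (s : ℝ) (u : (Fin n → ℂ) → ℂ) : ℝ≥0∞ :=
  ∫⁻ z : Fin n → ℂ, (‖u z‖₊ : ℝ≥0∞) ^ 2 * ENNReal.ofReal (jb z ^ (2 * s) * Real.exp (-2 * Φ z))

/-- A conic subset of `ℂⁿ`. -/
def IsConic {n : ℕ} (V : Set (Fin n → ℂ)) : Prop := ∀ z ∈ V, ∀ t : ℝ, 0 < t → t • z ∈ V

/-- The `1/2`-Gelfand–Shilov wavefront set of `u` relative to `Φ`: the complement in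
`ℂⁿ∖{0}` of the points having an open conic neighborhood in `ℂⁿ∖{0}` on which
`|u(z)| ≤ C e^{Φ(z) - c|z|²}`. -/
def wf {n : ℕ} (Φ : (Fin n → ℂ) → ℝ) (u : (Fin n → ℂ) → ℂ) : Set (Fin n → ℂ) :=
  {z₀ | z₀ ≠ 0 ∧ ¬ ∃ V : Set (Fin n → ℂ), IsOpen V ∧ IsConic V ∧ (0 : Fin n → ℂ) ∉ V ∧ z₀ ∈ V ∧
      ∃ C c : ℝ, 0 < C ∧ 0 < c ∧ ∀ z ∈ V, ‖u z‖ ≤ C * Real.exp (Φ z - c * eSq z)}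

/-- A holomorphic quadratic form on `ℂ^{2n} = ℂⁿ_z × ℂⁿ_θ`. -/
def IsCQuad2 {n : ℕ} (Ψ : (Fin n → ℂ) → (Fin n → ℂ) → ℂ) : Prop :=
  ∃ B : ((Fin n → ℂ) × (Fin n → ℂ)) →ₗ[ℂ] ((Fin n → ℂ) × (Fin n → ℂ)) →ₗ[ℂ] ℂ,
    ∀ z θ, Ψ z θ = B (z, θ) (z, θ)

/-- A real quadratic form on `ℂⁿ × ℂⁿ` viewed as a real vector space. -/
def IsRQuadPair {n : ℕ} (R : (Fin n → ℂ) → (Fin n → ℂ) → ℝ) : Prop :=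
  ∃ B : ((Fin n → ℂ) × (Fin n → ℂ)) →ₗ[ℝ] ((Fin n → ℂ) × (Fin n → ℂ)) →ₗ[ℝ] ℝ,
    ∀ z w, R z w = B (z, w) (z, w)

/-- The Bergman-form integral operator
`G u (z) = a ∫ e^{2Ψ(z, w̄)} u(w) e^{-2Φ(w)} L(dw)`. -/
def berg {n : ℕ} (a : ℂ) (Ψ : (Fin n → ℂ) → (Fin n → ℂ) → ℂ) (Φ : (Fin n → ℂ) → ℝ)
    (u : (Fin n → ℂ) → ℂ) (z : Fin n → ℂ) : ℂ :=
  a * ∫ w : Fin n → ℂ, Complex.exp (2 * Ψ z (star w)) * u w * (Real.exp (-2 * Φ w) : ℂ)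

/-- Membership in `H^s_Φ(ℂⁿ)`: entire with finite weighted `L²` norm. -/
def memH {n : ℕ} (Φ : (Fin n → ℂ) → ℝ) (s : ℝ) (u : (Fin n → ℂ) → ℂ) : Prop :=
  Differentiable ℂ u ∧ hnorm Φ s u < ⊤

/-- The pairing `ψ_v(u) = ∫ u(z) conj(v(z)) e^{-2Φ(z)} dL(z)`. -/
def pairΦ {n : ℕ} (Φ : (Fin n → ℂ) → ℝ) (u v : (Fin n → ℂ) → ℂ) : ℂ :=
  ∫ z : Fin n → ℂ, u z * (starRingEnd ℂ) (v z) * (Real.exp (-2 * Φ z) : ℂ)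


section part1
open Module

lemma aux_gauss {n : ℕ} (L c : ℝ) (hc : 0 < c) :
    Integrable (fun z : Fin n → ℂ => Real.exp (L * ‖z‖ - c * ‖z‖ ^ 2)) := by
  set r : ℝ := (finrank ℝ (Fin n → ℂ) : ℝ) + 1 with hr
  have hr0 : 0 ≤ r := by positivity
  have h1 : Integrable (fun z : Fin n → ℂ => (1 + ‖z‖) ^ (-r)) :=
    integrable_one_add_norm (by rw [hr]; linarith)
  refine (h1.const_mul (Real.exp ((L + r) ^ 2 / (4 * c)))).mono' (by fun_prop) ?_
  refine Filter.Eventually.of_forall fun z => ?_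
  have ht : 0 ≤ ‖z‖ := norm_nonneg z
  rw [Real.norm_of_nonneg (Real.exp_pos _).le, Real.rpow_neg (by positivity),
    ← div_eq_mul_inv, le_div_iff₀ (by positivity)]
  have h2 : (1 + ‖z‖) ^ r ≤ Real.exp (r * ‖z‖) := by
    rw [mul_comm, Real.exp_mul]
    exact Real.rpow_le_rpow (by positivity) (by linarith [Real.add_one_le_exp ‖z‖]) hr0
  calc _ ≤ Real.exp (L * ‖z‖ - c * ‖z‖ ^ 2) * Real.exp (r * ‖z‖) := by gcongr
    _ = Real.exp (L * ‖z‖ - c * ‖z‖ ^ 2 + r * ‖z‖) := by rw [Real.exp_add]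
    _ ≤ _ := by
      apply Real.exp_le_exp.2
      rw [le_div_iff₀ (by positivity)]
      nlinarith [sq_nonneg (2 * c * ‖z‖ - (L + r))]

/-- moderate weights -/
structure Wt {n : ℕ} (ω : (Fin n → ℂ) → ℝ) (L : ℝ) : Prop where
  cont : Continuous ω
  pos : ∀ z, 0 < ω z
  L0 : 0 ≤ L
  le : ∀ z w, ω z ≤ ω w * Real.exp (L * ‖z - w‖)

lemma Wt.inv {n : ℕ} {ω : (Fin n → ℂ) → ℝ} {L : ℝ} (h : Wt ω L) : Wt (fun z => (ω z)⁻¹) L where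
  cont := h.cont.inv₀ fun z => (h.pos z).ne'
  pos z := inv_pos.2 (h.pos z)
  L0 := h.L0
  le z w := by
    have h1 := h.le w z
    rw [norm_sub_rev] at h1
    have := h.pos z
    have := h.pos w
    rw [inv_mul_eq_div, inv_le_comm₀ (by positivity) (by positivity), inv_div,
      div_le_iff₀ (by positivity)]
    exact h1

lemma eSq_nonneg {n : ℕ} (z : Fin n → ℂ) : 0 ≤ eSq z :=
  Finset.sum_nonneg fun i _ => Complex.normSq_nonneg _

lemma jb_pos {n : ℕ} (z : Fin n → ℂ) : 0 < jb z :=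
  Real.sqrt_pos.2 (by linarith [eSq_nonneg z])

lemma jb_cont {n : ℕ} : Continuous (jb : (Fin n → ℂ) → ℝ) := by
  unfold jb eSq
  have := Complex.continuous_normSq
  fun_prop

lemma jb_le {n : ℕ} (z w : Fin n → ℂ) : jb z ≤ jb w * Real.exp (n * ‖z - w‖) := by
  set d := ‖z - w‖ with hd
  have hd0 : 0 ≤ d := norm_nonneg _
  have h1 : eSq z ≤ ∑ i : Fin n, (Complex.normSq (w i) + d * (1 + Complex.normSq (w i)) + d ^ 2) := by
    refine Finset.sum_le_sum fun i _ => ?_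
    have h2 : ‖z i - w i‖ ≤ d := norm_le_pi_norm (z - w) i
    have h3 : ‖z i‖ ≤ ‖w i‖ + d := by
      calc ‖z i‖ = ‖w i + (z i - w i)‖ := by ring_nf
        _ ≤ _ := (norm_add_le _ _).trans (by linarith)
    rw [Complex.normSq_eq_norm_sq, Complex.normSq_eq_norm_sq]
    have h4 : ‖z i‖ ^ 2 ≤ (‖w i‖ + d) ^ 2 := by gcongr
    nlinarith [mul_nonneg hd0 (sq_nonneg (‖w i‖ - 1))]
  have h5 : ∑ i : Fin n, (Complex.normSq (w i) + d * (1 + Complex.normSq (w i)) + d ^ 2)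
      = eSq w + d * (n + eSq w) + n * d ^ 2 := by
    simp [Finset.sum_add_distrib, ← Finset.mul_sum, eSq]
  have hw := eSq_nonneg w
  rcases Nat.eq_zero_or_pos n with hn | hn
  · subst hn
    have : z = w := Subsingleton.elim _ _
    subst this; simp
  have hn1 : (1 : ℝ) ≤ n := by exact_mod_cast hn
  have h6 : 1 + eSq z ≤ (1 + eSq w) * (1 + n * d) ^ 2 := by
    nlinarith [mul_nonneg hw hd0, mul_nonneg hw (mul_nonneg hd0 hd0), mul_nonneg hd0 hd0,
      mul_nonneg (mul_nonneg hw hd0) (sub_nonneg.2 hn1), mul_nonneg hd0 (sub_nonneg.2 hn1),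
      mul_nonneg (mul_nonneg hd0 hd0) (sub_nonneg.2 hn1),
      mul_nonneg (mul_nonneg hd0 hd0) (mul_nonneg (sub_nonneg.2 hn1) (sub_nonneg.2 hn1)),
      mul_nonneg hw (mul_nonneg (mul_nonneg hd0 hd0) (sq_nonneg (n : ℝ)))]
  unfold jb
  calc √(1 + eSq z) ≤ √((1 + eSq w) * (1 + n * d) ^ 2) := Real.sqrt_le_sqrt h6
    _ = √(1 + eSq w) * (1 + n * d) := by
      rw [Real.sqrt_mul (by linarith), Real.sqrt_sq (by positivity)]
    _ ≤ _ := by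
      gcongr
      linarith [Real.add_one_le_exp (n * d)]

lemma jb_wt {n : ℕ} (s : ℝ) : Wt (fun z : Fin n → ℂ => jb z ^ s) (n * |s|) := by
  have key : ∀ s : ℝ, 0 ≤ s → Wt (fun z : Fin n → ℂ => jb z ^ s) (n * |s|) := by
    intro s hs
    refine ⟨jb_cont.rpow_const fun z => Or.inl (jb_pos z).ne', fun z => Real.rpow_pos_of_pos (jb_pos z) _,
      by positivity, fun z w => ?_⟩
    have := jb_pos w
    have := jb_pos z
    calc jb z ^ s ≤ (jb w * Real.exp (n * ‖z - w‖)) ^ s := by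
          gcongr
          exact jb_le z w
      _ = _ := by
        rw [Real.mul_rpow (by positivity) (by positivity), ← Real.exp_mul, abs_of_nonneg hs]
        ring_nf
  rcases le_total 0 s with hs | hs
  · exact key s hs
  · have := (key (-s) (by linarith)).inv
    simp only [abs_neg] at this
    convert this using 2 with z
    rw [Real.rpow_neg (jb_pos z).le, inv_inv]

/-- The data attached to a strictly plurisubharmonic quadratic form. -/
structure Dat {n : ℕ} (Φ : (Fin n → ℂ) → ℝ) where
  q : (Fin n → ℂ) → ℂ
  hq : Differentiable ℂ q
  h : (Fin n → ℂ) → ((Fin n → ℂ) →L[ℂ] ℂ)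
  M : ℝ
  hM0 : 0 ≤ M
  hM : ∀ w, ‖h w‖ ≤ M * ‖w‖
  hcont : Continuous h
  hsymm : ∀ z w, h w z = (starRingEnd ℂ) (h z w)
  c : ℝ
  hc : 0 < c
  hpos : ∀ z, c * ‖z‖ ^ 2 ≤ (h z z).re
  hΦ : ∀ z, Φ z = (h z z).re + (q z).re

lemma exists_pos_lower {n : ℕ} (N : (Fin n → ℂ) → ℝ) (hN : Continuous N)
    (hs : ∀ (t : ℝ) z, N (t • z) = t ^ 2 * N z) (hp : ∀ z, z ≠ 0 → 0 < N z) :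
    ∃ c, 0 < c ∧ ∀ z, c * ‖z‖ ^ 2 ≤ N z := by
  have h0 : N 0 = 0 := by simpa using hs 0 0
  rcases (Metric.sphere (0 : Fin n → ℂ) 1).eq_empty_or_nonempty with he | hne
  · refine ⟨1, one_pos, fun z => ?_⟩
    by_cases hz : z = 0
    · simp [hz, h0]
    · exfalso
      have : ‖z‖⁻¹ • z ∈ Metric.sphere (0 : Fin n → ℂ) 1 := by
        simp [norm_smul, hz]
      rw [he] at this
      exact this
  · obtain ⟨x, hx, hmin⟩ := (isCompact_sphere (0 : Fin n → ℂ) 1).exists_isMinOn hne hN.continuousOn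
    have hx0 : x ≠ 0 := by
      rintro rfl
      simp at hx
    refine ⟨N x, hp x hx0, fun z => ?_⟩
    by_cases hz : z = 0
    · simp [hz, h0]
    · have hzn : ‖z‖ ≠ 0 := norm_ne_zero_iff.2 hz
      have h1 : ‖z‖⁻¹ • z ∈ Metric.sphere (0 : Fin n → ℂ) 1 := by
        simp [norm_smul, hz]
      have h2 : N x ≤ N (‖z‖⁻¹ • z) := hmin h1
      have h3 : N z = ‖z‖ ^ 2 * N (‖z‖⁻¹ • z) := by
        rw [← hs, smul_smul, mul_inv_cancel₀ hzn, one_smul]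
      rw [h3, mul_comm]
      gcongr

lemma real_smul_I {n : ℕ} (t : ℝ) (z : Fin n → ℂ) : Complex.I • (t • z) = t • (Complex.I • z) :=
  smul_comm _ _ _

lemma I_I {n : ℕ} (z : Fin n → ℂ) : Complex.I • (Complex.I • z) = -z := by
  rw [smul_smul, Complex.I_mul_I, neg_one_smul]

/-- upgrade an `ℝ`-linear map commuting with `I` -/
def mkC {n : ℕ} (f : (Fin n → ℂ) →ₗ[ℝ] ℂ) (hf : ∀ z, f (Complex.I • z) = Complex.I * f z) :
    (Fin n → ℂ) →ₗ[ℂ] ℂ where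
  toFun := f
  map_add' := f.map_add
  map_smul' c z := by
    have h1 : c • z = c.re • z + c.im • (Complex.I • z) := by
      ext i
      simp only [Pi.smul_apply, Pi.add_apply, smul_eq_mul, Complex.real_smul]
      conv_lhs => rw [← Complex.re_add_im c]
      ring
    rw [h1, f.map_add, f.map_smul, f.map_smul, hf]
    simp only [smul_eq_mul, Complex.real_smul, RingHom.id_apply]
    conv_rhs => rw [← Complex.re_add_im c]
    ring

lemma exists_dat {n : ℕ} (Φ : (Fin n → ℂ) → ℝ) (hΦ : IsSPSH Φ) : Nonempty (Dat Φ) := by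
  obtain ⟨⟨B, hB⟩, hpos⟩ := hΦ
  set J : (Fin n → ℂ) →ₗ[ℝ] (Fin n → ℂ) :=
    { toFun := fun z => Complex.I • z
      map_add' := fun x y => smul_add _ _ _
      map_smul' := fun t z => smul_comm _ _ _ } with hJ
  have hJz : ∀ z, J z = Complex.I • z := fun z => rfl
  have hJJ : ∀ z, J (J z) = -z := fun z => I_I z
  -- symmetrised forms
  set S : (Fin n → ℂ) → (Fin n → ℂ) → ℝ := fun z w => (B z w + B w z) / 2 with hS
  -- h w z
  let f : (Fin n → ℂ) → ((Fin n → ℂ) →ₗ[ℝ] ℂ) := fun w =>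
    { toFun := fun z => (((S z w + S (J z) (J w)) / 2 : ℝ) : ℂ) +
        Complex.I * (((S z (J w) - S (J z) w) / 2 : ℝ) : ℂ)
      map_add' := fun x y => by
        simp only [hS, map_add, LinearMap.add_apply]; push_cast; ring
      map_smul' := fun t x => by
        simp only [hS, map_smul, LinearMap.smul_apply, smul_eq_mul, Complex.real_smul,
          RingHom.id_apply]; push_cast; ring }
  have hf : ∀ w z, f w (Complex.I • z) = Complex.I * f w z := by
    intro w z
    rw [← hJz]
    simp only [f, LinearMap.coe_mk, AddHom.coe_mk, hS, hJJ, map_neg, LinearMap.neg_apply]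
    push_cast
    ring_nf
    simp only [Complex.I_sq]
    ring
  let h0 : (Fin n → ℂ) →ₗ[ℝ] ((Fin n → ℂ) →L[ℂ] ℂ) :=
    { toFun := fun w => LinearMap.toContinuousLinearMap (mkC (f w) (hf w))
      map_add' := fun x y => by
        ext1 z
        simp only [mkC, f, hS, map_add, LinearMap.add_apply, LinearMap.coe_toContinuousLinearMap',
          LinearMap.coe_mk, AddHom.coe_mk, _root_.add_apply]
        push_cast; ring
      map_smul' := fun t x => by
        ext1 z
        simp only [mkC, f, hS, map_smul, LinearMap.smul_apply, LinearMap.coe_toContinuousLinearMap',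
          LinearMap.coe_mk, AddHom.coe_mk, _root_.smul_apply, smul_eq_mul,
          Complex.real_smul, RingHom.id_apply]
        push_cast; ring }
  have h0a : ∀ w z, h0 w z = (((S z w + S (J z) (J w)) / 2 : ℝ) : ℂ) +
        Complex.I * (((S z (J w) - S (J z) w) / 2 : ℝ) : ℂ) := fun w z => rfl
  have hre : ∀ z, (h0 z z).re = (Φ z + Φ (Complex.I • z)) / 2 := by
    intro z
    rw [h0a, hB, hB, ← hJz]
    simp [hS]
  let g : (Fin n → ℂ) → ((Fin n → ℂ) →ₗ[ℝ] ℂ) := fun w =>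
    { toFun := fun z => (((S z w - S (J z) (J w)) / 2 : ℝ) : ℂ) -
        Complex.I * (((S (J z) w + S z (J w)) / 2 : ℝ) : ℂ)
      map_add' := fun x y => by
        simp only [hS, map_add, LinearMap.add_apply]; push_cast; ring
      map_smul' := fun t x => by
        simp only [hS, map_smul, LinearMap.smul_apply, smul_eq_mul, Complex.real_smul,
          RingHom.id_apply]; push_cast; ring }
  have hg : ∀ w z, g w (Complex.I • z) = Complex.I * g w z := by
    intro w z
    rw [← hJz]
    simp only [g, LinearMap.coe_mk, AddHom.coe_mk, hS, hJJ, map_neg, LinearMap.neg_apply]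
    push_cast
    ring_nf
    simp only [Complex.I_sq]
    ring
  have hgs : ∀ w z, g w z = g z w := by
    intro w z
    simp only [g, LinearMap.coe_mk, AddHom.coe_mk, hS]
    push_cast
    ring
  let G0 : (Fin n → ℂ) →ₗ[ℂ] ((Fin n → ℂ) →L[ℂ] ℂ) :=
    { toFun := fun w => LinearMap.toContinuousLinearMap (mkC (g w) (hg w))
      map_add' := fun x y => by
        ext1 z
        change g (x + y) z = g x z + g y z
        rw [hgs, hgs x, hgs y, map_add]
      map_smul' := fun t x => by
        ext1 z
        change g (t • x) z = t * g x z
        rw [hgs, hgs x]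
        exact (mkC (g z) (hg z)).map_smul t x }
  have hG : ∀ z, G0 z z = (((S z z - S (J z) (J z)) / 2 : ℝ) : ℂ) -
        Complex.I * (((S (J z) z + S z (J z)) / 2 : ℝ) : ℂ) := fun z => rfl
  have hcont : Continuous h0 := h0.continuous_of_finiteDimensional
  obtain ⟨c, hc, hcb⟩ := exists_pos_lower (fun z => (h0 z z).re)
    (Complex.continuous_re.comp (hcont.clm_apply continuous_id))
    (by
      intro t z
      simp only [h0a]
      simp only [hS, map_smul, LinearMap.smul_apply, smul_eq_mul, Complex.add_re,
        Complex.ofReal_re, Complex.mul_re, Complex.I_re, Complex.I_im, Complex.ofReal_im]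
      ring)
    (by
      intro z hz
      rw [hre]
      linarith [hpos z hz])
  refine ⟨⟨fun z => G0 z z, ?_, h0, ‖LinearMap.toContinuousLinearMap h0‖, ContinuousLinearMap.opNorm_nonneg _,
    fun w => (LinearMap.toContinuousLinearMap h0).le_opNorm w, hcont, ?_, c, hc, hcb, ?_⟩⟩
  · have : Differentiable ℂ fun z => (LinearMap.toContinuousLinearMap G0) z z := by fun_prop
    exact this
  · intro z w
    simp only [h0a, hS, map_add, map_mul, Complex.conj_ofReal, Complex.conj_I]
    push_cast
    ring
  · intro z
    rw [hre, hG, hB, hB, ← hJz]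
    simp [hS]
    ring
end part1

section part2

lemma rot_mp {n : ℕ} (θ : ℝ) :
    MeasurePreserving (fun z : Fin n → ℂ => Complex.exp (θ * Complex.I) • z) volume volume := by
  have h1 : ∀ _i : Fin n, MeasurePreserving (fun z : ℂ => Complex.exp (θ * Complex.I) * z)
      volume volume := by
    intro _
    exact (rotation (Circle.exp θ)).measurePreserving
  exact volume_preserving_pi h1

lemma mean_value {n : ℕ} (g : (Fin n → ℂ) → ℂ) (hg : Differentiable ℂ g) (ρ : (Fin n → ℂ) → ℝ)
    (hρ : Continuous ρ) (hrot : ∀ (θ : ℝ) z, ρ (Complex.exp (θ * Complex.I) • z) = ρ z)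
    (hint : Integrable (fun z => g z * (ρ z : ℂ))) :
    ∫ z, g z * (ρ z : ℂ) = g 0 * ((∫ z, ρ z : ℝ) : ℂ) := by
  set F : ℝ → (Fin n → ℂ) → ℂ := fun θ z => g (Complex.exp (θ * Complex.I) • z) * (ρ z : ℂ) with hF
  have hFr : ∀ θ, F θ = (fun z => g z * (ρ z : ℂ)) ∘ (fun z => Complex.exp (θ * Complex.I) • z) := by
    intro θ; ext z; simp [hF, hrot]
  have hemb : ∀ θ : ℝ, MeasurableEmbedding (fun z : Fin n → ℂ => Complex.exp (θ * Complex.I) • z) :=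
    fun θ => (Homeomorph.smulOfNeZero _ (Complex.exp_ne_zero _)).measurableEmbedding
  have hFi : ∀ θ, Integrable (F θ) := fun θ => by
    rw [hFr]
    exact (rot_mp θ).integrable_comp_of_integrable hint
  have hI : ∀ θ, ∫ z, F θ z = ∫ z, g z * (ρ z : ℂ) := fun θ => by
    rw [hFr]
    exact (rot_mp θ).integral_comp (hemb θ) (fun z => g z * (ρ z : ℂ))
  have hIn : ∀ θ, ∫ z, ‖F θ z‖ = ∫ z, ‖g z * (ρ z : ℂ)‖ := fun θ => by
    rw [hFr]
    exact (rot_mp θ).integral_comp (hemb θ) (fun z => ‖g z * (ρ z : ℂ)‖)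
  have hgc := hg.continuous
  have hFc : Continuous (Function.uncurry F) := by
    simp only [hF, Function.uncurry_def]
    fun_prop
  have hprod : Integrable (Function.uncurry F)
      ((volume.restrict (Set.Ioc 0 (2 * Real.pi))).prod volume) := by
    rw [integrable_prod_iff hFc.aestronglyMeasurable]
    refine ⟨Filter.Eventually.of_forall hFi, ?_⟩
    simp only [Function.uncurry_apply_pair, hIn]
    exact integrable_const _
  have hswap := integral_integral_swap hprod
  have hcirc : ∀ z, ∫ θ in Set.Ioc 0 (2 * Real.pi), F θ z = (2 * Real.pi : ℝ) * (g 0 * ρ z) := by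
    intro z
    simp only [hF]
    rw [integral_mul_const]
    have h1 : DiffContOnCl ℂ (fun t : ℂ => g (t • z)) (Metric.ball 0 |1|) :=
      Differentiable.diffContOnCl (by fun_prop)
    have h2 := h1.circleAverage
    rw [Real.circleAverage_def, intervalIntegral.integral_of_le Real.two_pi_pos.le] at h2
    simp only [circleMap, zero_smul, zero_add, Complex.ofReal_one, one_mul] at h2
    rw [inv_smul_eq_iff₀ Real.two_pi_pos.ne'] at h2
    rw [h2, Complex.real_smul]
    ring
  simp only [hI, hcirc] at hswap
  rw [integral_const, integral_const_mul, integral_const_mul, integral_complex_ofReal] at hswap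
  simp only [measureReal_restrict_apply_univ, Real.volume_real_Ioc, sub_zero,
    max_eq_left Real.two_pi_pos.le, Complex.real_smul] at hswap
  have h2pi : ((2 * Real.pi : ℝ) : ℂ) ≠ 0 := by exact_mod_cast Real.two_pi_pos.ne'
  exact mul_left_cancel₀ h2pi hswap

variable {n : ℕ} {Φ : (Fin n → ℂ) → ℝ}

def Dat.N (D : Dat Φ) (z : Fin n → ℂ) : ℝ := (D.h z z).re

lemma Dat.hzz (D : Dat Φ) (z : Fin n → ℂ) : D.h z z = (D.N z : ℂ) := by
  have := D.hsymm z z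
  exact (Complex.conj_eq_iff_re.1 this.symm).symm

lemma Dat.h_add (D : Dat Φ) (w w' z : Fin n → ℂ) : D.h (w + w') z = D.h w z + D.h w' z := by
  rw [D.hsymm z (w + w'), map_add, map_add, ← D.hsymm, ← D.hsymm]

lemma Dat.h_smul (D : Dat Φ) (a : ℂ) (w z : Fin n → ℂ) :
    D.h (a • w) z = (starRingEnd ℂ) a * D.h w z := by
  rw [D.hsymm z (a • w), map_smul, smul_eq_mul, map_mul, ← D.hsymm]

lemma Dat.N_rot (D : Dat Φ) (θ : ℝ) (z : Fin n → ℂ) :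
    D.N (Complex.exp (θ * Complex.I) • z) = D.N z := by
  unfold Dat.N
  rw [D.h_smul, map_smul, smul_eq_mul, ← mul_assoc, ← Complex.normSq_eq_conj_mul_self,
    Complex.normSq_eq_norm_sq, Complex.norm_exp_ofReal_mul_I]
  simp

lemma Dat.N_cont (D : Dat Φ) : Continuous D.N :=
  Complex.continuous_re.comp (D.hcont.clm_apply continuous_id)

lemma Dat.Φ_eq (D : Dat Φ) (z : Fin n → ℂ) : Φ z = D.N z + (D.q z).re := D.hΦ z

lemma Dat.Φ_cont (D : Dat Φ) : Continuous Φ := by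
  have h : Φ = fun z => D.N z + (D.q z).re := funext D.hΦ
  rw [h]
  exact D.N_cont.add (Complex.continuous_re.comp D.hq.continuous)

lemma Dat.N_sub (D : Dat Φ) (z w : Fin n → ℂ) :
    D.N (z - w) = D.N z + D.N w - 2 * (D.h w z).re := by
  have h1 : D.h (z - w) (z - w) = D.h z z + D.h w w - D.h z w - D.h w z := by
    have : z - w = z + (-1 : ℂ) • w := by simp [sub_eq_add_neg]
    rw [this, D.h_add, D.h_smul, map_add, map_add, map_smul, map_smul]
    simp
    ring
  have h2 : (D.h z w).re = (D.h w z).re := by rw [D.hsymm w z, Complex.conj_re]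
  unfold Dat.N
  rw [h1]
  simp [h2]
  ring

def Dat.C (D : Dat Φ) : ℝ := ∫ z, Real.exp (-2 * D.N z)

lemma Dat.N_int (D : Dat Φ) : Integrable fun z => Real.exp (-2 * D.N z) := by
  refine (aux_gauss 0 (2 * D.c) (by linarith [D.hc])).mono'
    (Real.continuous_exp.comp (continuous_const.mul D.N_cont)).aestronglyMeasurable ?_
  refine Filter.Eventually.of_forall fun z => ?_
  rw [Real.norm_of_nonneg (Real.exp_pos _).le]
  apply Real.exp_le_exp.2
  have := D.hpos z
  unfold Dat.N
  linarith

lemma Dat.C_pos (D : Dat Φ) : 0 < D.C := integral_exp_pos D.N_int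

def Dat.k (D : Dat Φ) (z w : Fin n → ℂ) : ℂ :=
  (D.C⁻¹ : ℝ) * Complex.exp (2 * D.h w z + D.q z + (starRingEnd ℂ) (D.q w))

lemma Dat.k_cont (D : Dat Φ) : Continuous fun p : (Fin n → ℂ) × (Fin n → ℂ) => D.k p.1 p.2 := by
  unfold Dat.k
  have h1 : Continuous fun p : (Fin n → ℂ) × (Fin n → ℂ) => D.h p.2 p.1 :=
    (D.hcont.comp continuous_snd).clm_apply continuous_fst
  have h2 := D.hq.continuous
  have h3 := Complex.continuous_conj
  have h4 : Continuous fun p : (Fin n → ℂ) × (Fin n → ℂ) => (starRingEnd ℂ) (D.q p.2) :=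
    h3.comp (h2.comp continuous_snd)
  fun_prop

lemma Dat.k_diff (D : Dat Φ) (w : Fin n → ℂ) : Differentiable ℂ fun z => D.k z w := by
  unfold Dat.k
  have := D.hq
  fun_prop

lemma Dat.k_symm (D : Dat Φ) (z w : Fin n → ℂ) : (starRingEnd ℂ) (D.k z w) = D.k w z := by
  unfold Dat.k
  rw [map_mul, Complex.conj_ofReal, ← Complex.exp_conj]
  simp only [map_add, map_mul, ← D.hsymm, Complex.conj_conj, map_ofNat]
  ring_nf

lemma Dat.k_norm (D : Dat Φ) (z w : Fin n → ℂ) :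
    ‖D.k z w‖ = D.C⁻¹ * Real.exp (Φ z + Φ w - D.N (z - w)) := by
  unfold Dat.k
  rw [norm_mul, Complex.norm_exp, Complex.norm_real, Real.norm_of_nonneg (inv_pos.2 D.C_pos).le,
    D.N_sub, D.Φ_eq, D.Φ_eq]
  congr 2
  simp
  ring

/-- The majorant. -/
def Dat.g (D : Dat Φ) (L : ℝ) (d : Fin n → ℂ) : ℝ :=
  D.C⁻¹ * Real.exp (L * ‖d‖ - D.c * ‖d‖ ^ 2)

lemma Dat.g_nonneg (D : Dat Φ) (L : ℝ) (d : Fin n → ℂ) : 0 ≤ D.g L d :=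
  mul_nonneg (inv_pos.2 D.C_pos).le (Real.exp_pos _).le

lemma Dat.g_neg (D : Dat Φ) (L : ℝ) (z w : Fin n → ℂ) : D.g L (z - w) = D.g L (w - z) := by
  unfold Dat.g; rw [norm_sub_rev]

lemma Dat.g_cont (D : Dat Φ) (L : ℝ) : Continuous (D.g L) := by
  unfold Dat.g; fun_prop

lemma Dat.g_int (D : Dat Φ) (L : ℝ) : Integrable (D.g L) := (aux_gauss L D.c D.hc).const_mul _

lemma Dat.g_sq_int (D : Dat Φ) (L : ℝ) : Integrable (fun d => D.g L d ^ 2) := by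
  refine ((aux_gauss (2 * L) (2 * D.c) (by linarith [D.hc])).const_mul (D.C⁻¹ ^ 2)).congr ?_
  refine Filter.Eventually.of_forall fun z => ?_
  simp only [Dat.g, mul_pow, ← Real.exp_nat_mul]
  congr 2
  push_cast
  ring

lemma Dat.k_le (D : Dat Φ) {ω : (Fin n → ℂ) → ℝ} {L : ℝ} (hω : Wt ω L) (z w : Fin n → ℂ) :
    ‖D.k z w‖ * (ω z * Real.exp (-Φ z)) ≤ D.g L (z - w) * (ω w * Real.exp (Φ w)) := by
  rw [D.k_norm]
  have h1 := hω.le z w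
  have h2 := D.hpos (z - w)
  have h3 := D.C_pos
  have h4 := hω.pos w
  unfold Dat.g
  calc D.C⁻¹ * Real.exp (Φ z + Φ w - D.N (z - w)) * (ω z * Real.exp (-Φ z))
      = D.C⁻¹ * ω z * (Real.exp (Φ z + Φ w - D.N (z - w)) * Real.exp (-Φ z)) := by ring
    _ = D.C⁻¹ * ω z * Real.exp (Φ w - D.N (z - w)) := by rw [← Real.exp_add]; ring_nf
    _ ≤ D.C⁻¹ * (ω w * Real.exp (L * ‖z - w‖)) * Real.exp (Φ w - D.c * ‖z - w‖ ^ 2) := by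
      unfold Dat.N
      gcongr
    _ = D.C⁻¹ * ω w * (Real.exp (L * ‖z - w‖) * Real.exp (Φ w - D.c * ‖z - w‖ ^ 2)) := by ring
    _ = D.C⁻¹ * ω w * (Real.exp (L * ‖z - w‖ - D.c * ‖z - w‖ ^ 2) * Real.exp (Φ w)) := by
      rw [← Real.exp_add, ← Real.exp_add]; ring_nf
    _ = _ := by ring

/-- The weighted function. -/
def tw (ω Φ : (Fin n → ℂ) → ℝ) (u : (Fin n → ℂ) → ℂ) (z : Fin n → ℂ) : ℂ :=
  u z * ((ω z * Real.exp (-Φ z) : ℝ) : ℂ)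

lemma tw_norm {ω : (Fin n → ℂ) → ℝ} {L : ℝ} (hω : Wt ω L) (u : (Fin n → ℂ) → ℂ) (z : Fin n → ℂ) :
    ‖tw ω Φ u z‖ = ‖u z‖ * (ω z * Real.exp (-Φ z)) := by
  have := hω.pos z
  rw [tw, norm_mul, Complex.norm_real, Real.norm_of_nonneg (by positivity)]

lemma Dat.tw_cont (D : Dat Φ) {ω : (Fin n → ℂ) → ℝ} {L : ℝ} (hω : Wt ω L) {u : (Fin n → ℂ) → ℂ}
    (hu : Continuous u) : Continuous (tw ω Φ u) := by
  unfold tw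
  have := hω.cont
  have := D.Φ_cont
  fun_prop

lemma Dat.k_memLp (D : Dat Φ) {ω : (Fin n → ℂ) → ℝ} {L : ℝ} (hω : Wt ω L) (w : Fin n → ℂ) :
    MemLp (tw ω Φ (fun z => D.k z w)) 2 := by
  have hc : Continuous (tw ω Φ (fun z => D.k z w)) := D.tw_cont hω (D.k_diff w).continuous
  rw [memLp_two_iff_integrable_sq_norm hc.aestronglyMeasurable]
  refine (((D.g_sq_int L).comp_sub_right w).mul_const ((ω w * Real.exp (Φ w)) ^ 2)).mono'
    (hc.norm.pow 2).aestronglyMeasurable ?_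
  refine Filter.Eventually.of_forall fun z => ?_
  rw [tw_norm hω, Real.norm_of_nonneg (by positivity), ← mul_pow]
  have := hω.pos z
  exact pow_le_pow_left₀ (by positivity) (D.k_le hω z w) 2

lemma tw_mul {ω : (Fin n → ℂ) → ℝ} {L : ℝ} (hω : Wt ω L) (u v : (Fin n → ℂ) → ℂ) (z : Fin n → ℂ) :
    u z * (starRingEnd ℂ) (v z) * (Real.exp (-2 * Φ z) : ℂ) =
      inner ℂ (tw (fun z => (ω z)⁻¹) Φ v z) (tw ω Φ u z) := by
  have h1 : (ω z : ℂ) ≠ 0 := by exact_mod_cast (hω.pos z).ne'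
  have h2 : Real.exp (-2 * Φ z) = Real.exp (-Φ z) * Real.exp (-Φ z) := by
    rw [← Real.exp_add]; ring_nf
  rw [h2]
  simp only [tw, RCLike.inner_apply, map_mul, Complex.conj_ofReal]
  push_cast
  field_simp

lemma pair_int {ω : (Fin n → ℂ) → ℝ} {L : ℝ} (hω : Wt ω L) {u v : (Fin n → ℂ) → ℂ}
    (hu : MemLp (tw ω Φ u) 2) (hv : MemLp (tw (fun z => (ω z)⁻¹) Φ v) 2) :
    Integrable fun z => u z * (starRingEnd ℂ) (v z) * (Real.exp (-2 * Φ z) : ℂ) := by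
  simp only [tw_mul hω]
  refine (L2.integrable_inner (𝕜 := ℂ) (hv.toLp _) (hu.toLp _)).congr ?_
  filter_upwards [hu.coeFn_toLp, hv.coeFn_toLp] with z h1 h2
  rw [h1, h2]

lemma Dat.repro_int (D : Dat Φ) {ω : (Fin n → ℂ) → ℝ} {L : ℝ} (hω : Wt ω L) {u : (Fin n → ℂ) → ℂ}
    (hu : MemLp (tw ω Φ u) 2) (z : Fin n → ℂ) :
    Integrable fun w => D.k z w * u w * (Real.exp (-2 * Φ w) : ℂ) := by
  have := pair_int hω hu (D.k_memLp hω.inv z)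
  simp only [D.k_symm] at this
  simpa only [mul_comm (D.k z _)] using this

lemma Dat.repro (D : Dat Φ) {ω : (Fin n → ℂ) → ℝ} {L : ℝ} (hω : Wt ω L) {u : (Fin n → ℂ) → ℂ}
    (hud : Differentiable ℂ u) (hu : MemLp (tw ω Φ u) 2) (z : Fin n → ℂ) :
    ∫ w, D.k z w * u w * (Real.exp (-2 * Φ w) : ℂ) = u z := by
  have hint := (D.repro_int hω hu z).comp_add_left z
  rw [← integral_add_left_eq_self _ z]
  set g : (Fin n → ℂ) → ℂ := fun ζ =>
    (D.C⁻¹ : ℝ) * (u (z + ζ) * Complex.exp (D.q z - D.q (z + ζ) - 2 * D.h z ζ)) with hg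
  have hgd : Differentiable ℂ g := by
    have := D.hq
    fun_prop
  have key : ∀ ζ, D.k z (z + ζ) * u (z + ζ) * (Real.exp (-2 * Φ (z + ζ)) : ℂ)
      = g ζ * (Real.exp (-2 * D.N ζ) : ℂ) := by
    intro ζ
    have h1 : (Φ (z + ζ) : ℂ) = D.N (z + ζ) +
        (D.q (z + ζ) + (starRingEnd ℂ) (D.q (z + ζ))) / 2 := by
      rw [D.Φ_eq, Complex.add_conj]; push_cast; ring
    have h2 : (D.N (z + ζ) : ℂ) = D.h z z + D.h z ζ + D.h ζ z + D.N ζ := by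
      rw [← D.hzz, ← D.hzz, D.h_add, map_add, map_add]; ring
    have h3 : Complex.exp (2 * D.h (z + ζ) z + D.q z + (starRingEnd ℂ) (D.q (z + ζ))) *
        (Real.exp (-2 * Φ (z + ζ)) : ℂ) =
        Complex.exp (D.q z - D.q (z + ζ) - 2 * D.h z ζ) * (Real.exp (-2 * D.N ζ) : ℂ) := by
      push_cast
      rw [← Complex.exp_add, ← Complex.exp_add, h1, h2, D.h_add]
      congr 1
      ring
    simp only [hg, Dat.k]
    linear_combination ((D.C⁻¹ : ℝ) : ℂ) * u (z + ζ) * h3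
  simp only [key] at hint ⊢
  rw [mean_value g hgd (fun ζ => Real.exp (-2 * D.N ζ))
    (Real.continuous_exp.comp (continuous_const.mul D.N_cont)) (fun θ ζ => by rw [D.N_rot]) hint]
  change g 0 * ((D.C : ℝ) : ℂ) = u z
  have hC : (D.C : ℂ) ≠ 0 := by exact_mod_cast D.C_pos.ne'
  simp only [hg, add_zero, map_zero, sub_self, mul_zero, Complex.exp_zero]
  push_cast
  field_simp

end part2

section part3
variable {n : ℕ} {Φ : (Fin n → ℂ) → ℝ}

lemma schur_inner {α : Type*} [MeasurableSpace α] (μ : Measure α) (G f : α → ℝ≥0∞)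
    (hG : Measurable G) (hf : Measurable f) :
    (∫⁻ w, G w * f w ∂μ) ^ 2 ≤ (∫⁻ w, G w ∂μ) * ∫⁻ w, G w * f w ^ 2 ∂μ := by
  have hh : ∀ x : ℝ≥0∞, (x ^ (1 / 2 : ℝ)) ^ (2 : ℕ) = x := fun x => by
    rw [← ENNReal.rpow_natCast, ← ENNReal.rpow_mul]; norm_num
  have h := ENNReal.lintegral_mul_le_Lp_mul_Lq μ Real.HolderConjugate.two_two
    (f := fun w => G w ^ (1 / 2 : ℝ)) (g := fun w => G w ^ (1 / 2 : ℝ) * f w)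
    (hG.pow_const _).aemeasurable ((hG.pow_const _).mul hf).aemeasurable
  have h1 : ∀ w, ((fun w => G w ^ (1 / 2 : ℝ)) * fun w => G w ^ (1 / 2 : ℝ) * f w) w = G w * f w := by
    intro w
    simp only [Pi.mul_apply]
    rw [← mul_assoc, ← sq, hh]
  simp only [h1, ENNReal.rpow_two, mul_pow, hh] at h
  calc _ ≤ ((∫⁻ w, G w ∂μ) ^ (1 / 2 : ℝ) * (∫⁻ w, G w * f w ^ 2 ∂μ) ^ (1 / 2 : ℝ)) ^ 2 := by
        gcongr
    _ = _ := by rw [mul_pow, hh, hh]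

lemma schur (G f : (Fin n → ℂ) → ℝ≥0∞) (hG : Measurable G) (hf : Measurable f) :
    ∫⁻ z, (∫⁻ w, G (w - z) * f w) ^ 2 ≤ (∫⁻ w, G w) * ((∫⁻ w, G w) * ∫⁻ w, f w ^ 2) := by
  have hm : Measurable fun p : (Fin n → ℂ) × (Fin n → ℂ) => G (p.2 - p.1) * f p.2 ^ 2 := by fun_prop
  calc ∫⁻ z, (∫⁻ w, G (w - z) * f w) ^ 2
      ≤ ∫⁻ z, (∫⁻ w, G w) * ∫⁻ w, G (w - z) * f w ^ 2 := by
        refine lintegral_mono fun z => ?_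
        refine (schur_inner volume (fun w => G (w - z)) f (by fun_prop) hf).trans_eq ?_
        rw [lintegral_sub_right_eq_self G z]
    _ = (∫⁻ w, G w) * ∫⁻ z, ∫⁻ w, G (w - z) * f w ^ 2 :=
        lintegral_const_mul _ hm.lintegral_prod_right'
    _ = (∫⁻ w, G w) * ∫⁻ w, ∫⁻ z, G (w - z) * f w ^ 2 := by
        rw [lintegral_lintegral_swap hm.aemeasurable]
    _ = (∫⁻ w, G w) * ∫⁻ w, (∫⁻ z, G z) * f w ^ 2 := by
        congr 1
        refine lintegral_congr fun w => ?_
        rw [lintegral_mul_const _ (by fun_prop), lintegral_sub_left_eq_self G w]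
    _ = _ := by rw [lintegral_const_mul _ (by fun_prop)]

/-- The projection. -/
def Dat.P (D : Dat Φ) (f : (Fin n → ℂ) → ℂ) (z : Fin n → ℂ) : ℂ :=
  ∫ w, D.k z w * f w * (Real.exp (-2 * Φ w) : ℂ)

lemma Dat.tw_meas (D : Dat Φ) {ω : (Fin n → ℂ) → ℝ} {L : ℝ} (hω : Wt ω L) {u : (Fin n → ℂ) → ℂ}
    (hu : Measurable u) : Measurable (tw ω Φ u) := by
  unfold tw
  have := hω.cont.measurable
  have := D.Φ_cont.measurable
  fun_prop

lemma memLp_two_lintegral {f : (Fin n → ℂ) → ℂ} (hf : MemLp f 2) : ∫⁻ z, ‖f z‖ₑ ^ 2 < ⊤ := by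
  have := lintegral_rpow_enorm_lt_top_of_eLpNorm_lt_top (by norm_num) (by norm_num) hf.2
  simpa using this

lemma memLp_two_of_lintegral {f : (Fin n → ℂ) → ℂ} (hf : AEStronglyMeasurable f)
    (h : ∫⁻ z, ‖f z‖ₑ ^ 2 < ⊤) : MemLp f 2 := by
  refine ⟨hf, ?_⟩
  rw [eLpNorm_lt_top_iff_lintegral_rpow_enorm_lt_top (by norm_num) (by norm_num)]
  simpa using h

lemma Dat.P_le (D : Dat Φ) {ω : (Fin n → ℂ) → ℝ} {L : ℝ} (hω : Wt ω L) (f : (Fin n → ℂ) → ℂ)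
    (z : Fin n → ℂ) :
    ‖tw ω Φ (D.P f) z‖ₑ ≤ ∫⁻ w, ENNReal.ofReal (D.g L (w - z)) * ‖tw ω Φ f w‖ₑ := by
  have h1 : tw ω Φ (D.P f) z = ∫ w, D.k z w * f w * (Real.exp (-2 * Φ w) : ℂ) *
      ((ω z * Real.exp (-Φ z) : ℝ) : ℂ) := by
    rw [integral_mul_const]; rfl
  rw [h1]
  refine (enorm_integral_le_lintegral_enorm _).trans (lintegral_mono fun w => ?_)
  rw [← ofReal_norm, ← ofReal_norm, ← ENNReal.ofReal_mul (D.g_nonneg _ _)]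
  apply ENNReal.ofReal_le_ofReal
  have hz := hω.pos z
  rw [tw_norm hω, norm_mul, norm_mul, norm_mul, Complex.norm_real, Complex.norm_real,
    Real.norm_of_nonneg (by positivity), Real.norm_of_nonneg (by positivity)]
  have h2 := D.k_le hω z w
  rw [D.g_neg] at h2
  have h3 : Real.exp (-2 * Φ w) = Real.exp (-Φ w) * Real.exp (-Φ w) := by
    rw [← Real.exp_add]; ring_nf
  have h4 : Real.exp (Φ w) * Real.exp (-Φ w) = 1 := by rw [← Real.exp_add]; simp
  calc _ = (‖D.k z w‖ * (ω z * Real.exp (-Φ z))) * (‖f w‖ * Real.exp (-2 * Φ w)) := by ring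
    _ ≤ (D.g L (w - z) * (ω w * Real.exp (Φ w))) * (‖f w‖ * Real.exp (-2 * Φ w)) := by gcongr
    _ = D.g L (w - z) * (‖f w‖ * (ω w * Real.exp (-Φ w))) * (Real.exp (Φ w) * Real.exp (-Φ w)) := by
      rw [h3]; ring
    _ = _ := by rw [h4, mul_one]

lemma Dat.R_int (D : Dat Φ) {ω : (Fin n → ℂ) → ℝ} {L : ℝ} (hω : Wt ω L) {f : (Fin n → ℂ) → ℂ}
    (hfm : Measurable f) (hf : MemLp (tw ω Φ f) 2) (A : ℝ) :
    Integrable fun w => Real.exp (A * ‖w‖) *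
      ‖Complex.exp ((starRingEnd ℂ) (D.q w)) * f w * (Real.exp (-2 * Φ w) : ℂ)‖ := by
  have h1 : MemLp (fun w : Fin n → ℂ => Real.exp ((A + L) * ‖w‖ - D.c * ‖w‖ ^ 2)) 2 := by
    rw [memLp_two_iff_integrable_sq (by fun_prop)]
    refine (aux_gauss (2 * (A + L)) (2 * D.c) (by linarith [D.hc])).congr ?_
    refine Filter.Eventually.of_forall fun z => ?_
    simp only [← Real.exp_nat_mul]
    congr 1
    push_cast
    ring
  have h2 := (h1.integrable_mul hf.norm).const_mul ((ω 0)⁻¹)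
  have hΦm := D.Φ_cont.measurable
  have hqm := D.hq.continuous.measurable
  have hcm := Complex.continuous_conj.measurable
  refine h2.mono' ?_ (Filter.Eventually.of_forall fun w => ?_)
  · apply Measurable.aestronglyMeasurable
    have : Measurable fun w => (starRingEnd ℂ) (D.q w) := hcm.comp hqm
    fun_prop
  · have hw := hω.pos w
    have h0 := hω.pos 0
    have h3 := hω.inv.le w 0
    have h5 := D.hpos w
    simp only [sub_zero] at h3
    rw [Real.norm_of_nonneg (by positivity)]
    simp only [Pi.mul_apply]
    rw [tw_norm hω, norm_mul, norm_mul, Complex.norm_exp, Complex.norm_real, Complex.conj_re,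
      Real.norm_of_nonneg (by positivity)]
    have h4 : Real.exp (D.q w).re * Real.exp (-2 * Φ w) = Real.exp (-D.N w) * Real.exp (-Φ w) := by
      rw [← Real.exp_add, ← Real.exp_add, D.Φ_eq]; ring_nf
    calc _ = Real.exp (A * ‖w‖) * (Real.exp (D.q w).re * Real.exp (-2 * Φ w)) * ‖f w‖ := by ring
      _ = Real.exp (A * ‖w‖) * Real.exp (-D.N w) * (‖f w‖ * (ω w * Real.exp (-Φ w))) * (ω w)⁻¹ := by
        rw [h4]; field_simp
      _ ≤ Real.exp (A * ‖w‖) * Real.exp (-(D.c * ‖w‖ ^ 2)) * (‖f w‖ * (ω w * Real.exp (-Φ w))) *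
          ((ω 0)⁻¹ * Real.exp (L * ‖w‖)) := by
        unfold Dat.N
        gcongr
      _ = (ω 0)⁻¹ * ((Real.exp (A * ‖w‖) * Real.exp (-(D.c * ‖w‖ ^ 2)) * Real.exp (L * ‖w‖)) *
          (‖f w‖ * (ω w * Real.exp (-Φ w)))) := by ring
      _ = _ := by
        rw [← Real.exp_add, ← Real.exp_add]
        ring_nf

lemma Dat.P_diff (D : Dat Φ) {ω : (Fin n → ℂ) → ℝ} {L : ℝ} (hω : Wt ω L) {f : (Fin n → ℂ) → ℂ}
    (hfm : Measurable f) (hf : MemLp (tw ω Φ f) 2) : Differentiable ℂ (D.P f) := by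
  set R : (Fin n → ℂ) → ℂ := fun w =>
    Complex.exp ((starRingEnd ℂ) (D.q w)) * f w * (Real.exp (-2 * Φ w) : ℂ) with hR
  have hRi : ∀ A : ℝ, Integrable fun w => Real.exp (A * ‖w‖) * ‖R w‖ := D.R_int hω hfm hf
  have hΦm := D.Φ_cont.measurable
  have hqm := D.hq.continuous.measurable
  have hcm := Complex.continuous_conj.measurable
  have hRm : Measurable R := by
    have : Measurable fun w => (starRingEnd ℂ) (D.q w) := hcm.comp hqm
    fun_prop
  have hP : D.P f = fun z => (D.C⁻¹ : ℝ) * Complex.exp (D.q z) *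
      ∫ w, Complex.exp (2 * D.h w z) * R w := by
    ext z
    rw [← integral_const_mul]
    unfold Dat.P
    refine integral_congr_ae (Filter.Eventually.of_forall fun w => ?_)
    simp only [hR, Dat.k, Complex.exp_add]
    ring
  have hhz : ∀ z, Continuous fun w => D.h w z := fun z => D.hcont.clm_apply continuous_const
  have hEm : ∀ z, Measurable fun w => Complex.exp (2 * D.h w z) := fun z => by
    have := (hhz z).measurable
    fun_prop
  have hnb : ∀ w x : Fin n → ℂ, ‖Complex.exp (2 * D.h w x)‖ ≤ Real.exp (2 * D.M * ‖x‖ * ‖w‖) := by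
    intro w x
    rw [Complex.norm_exp]
    apply Real.exp_le_exp.2
    calc (2 * D.h w x).re ≤ ‖2 * D.h w x‖ := Complex.re_le_norm _
      _ = 2 * ‖D.h w x‖ := by simp
      _ ≤ 2 * (D.M * ‖w‖ * ‖x‖) := by
        have := (D.h w).le_of_opNorm_le (D.hM w) x
        linarith
      _ = _ := by ring
  have hM0 := D.hM0
  rw [hP]
  have hmain : Differentiable ℂ fun z => ∫ w, Complex.exp (2 * D.h w z) * R w := by
    intro x₀
    refine (hasFDerivAt_integral_of_dominated_of_fderiv_le (𝕜 := ℂ) (s := Metric.ball x₀ 1)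
      (F := fun z w => Complex.exp (2 * D.h w z) * R w)
      (F' := fun z w => (Complex.exp (2 * D.h w z) * R w * 2) • D.h w)
      (bound := fun w => Real.exp ((2 * D.M * (‖x₀‖ + 1) + 2 * D.M) * ‖w‖) * ‖R w‖)
      (Metric.ball_mem_nhds _ one_pos) ?_ ?_ ?_ ?_ (hRi _) ?_).differentiableAt
    · exact Filter.Eventually.of_forall fun x => ((hEm x).mul hRm).aestronglyMeasurable
    · refine (hRi (2 * D.M * ‖x₀‖)).mono' ((hEm x₀).mul hRm).aestronglyMeasurable ?_
      refine Filter.Eventually.of_forall fun w => ?_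
      rw [norm_mul]
      gcongr
      exact hnb w x₀
    · exact ((((hEm x₀).mul hRm).mul_const 2).aestronglyMeasurable).smul
        D.hcont.aestronglyMeasurable
    · refine Filter.Eventually.of_forall fun w x hx => ?_
      have hx1 : ‖x‖ ≤ ‖x₀‖ + 1 := by
        have h1 : ‖x - x₀‖ < 1 := by simpa [dist_eq_norm] using hx
        have h2 := norm_le_norm_add_norm_sub' x x₀
        linarith
      rw [norm_smul, norm_mul, norm_mul]
      have h1 : ‖(2 : ℂ)‖ = 2 := by simp
      rw [h1]
      have h2 : 2 * D.M * ‖w‖ ≤ Real.exp (2 * D.M * ‖w‖) := by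
        linarith [Real.add_one_le_exp (2 * D.M * ‖w‖)]
      calc ‖Complex.exp (2 * D.h w x)‖ * ‖R w‖ * 2 * ‖D.h w‖
          ≤ Real.exp (2 * D.M * ‖x‖ * ‖w‖) * ‖R w‖ * 2 * (D.M * ‖w‖) := by
            gcongr
            · exact hnb w x
            · exact D.hM w
        _ = Real.exp (2 * D.M * ‖x‖ * ‖w‖) * ‖R w‖ * (2 * D.M * ‖w‖) := by ring
        _ ≤ Real.exp (2 * D.M * (‖x₀‖ + 1) * ‖w‖) * ‖R w‖ * Real.exp (2 * D.M * ‖w‖) := by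
            gcongr
        _ = (Real.exp (2 * D.M * (‖x₀‖ + 1) * ‖w‖) * Real.exp (2 * D.M * ‖w‖)) * ‖R w‖ := by ring
        _ = _ := by rw [← Real.exp_add]; ring_nf
    · refine Filter.Eventually.of_forall fun w x _ => ?_
      have h1 : HasFDerivAt (fun z => Complex.exp (2 * D.h w z))
          (Complex.exp (2 * D.h w x) • ((2 : ℂ) • D.h w)) x :=
        ((D.h w).hasFDerivAt.const_mul 2).cexp
      have h2 := h1.mul_const (R w)
      convert! h2 using 1
      rw [smul_smul, smul_smul]
      congr 1
      ring
  have := D.hq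
  fun_prop

lemma Dat.P_memLp (D : Dat Φ) {ω : (Fin n → ℂ) → ℝ} {L : ℝ} (hω : Wt ω L) {f : (Fin n → ℂ) → ℂ}
    (hfm : Measurable f) (hf : MemLp (tw ω Φ f) 2) : MemLp (tw ω Φ (D.P f)) 2 := by
  refine memLp_two_of_lintegral
    (D.tw_cont hω (D.P_diff hω hfm hf).continuous).aestronglyMeasurable ?_
  have hG : ∫⁻ w, ENNReal.ofReal (D.g L w) < ⊤ := by
    have := (D.g_int L).lintegral_lt_top
    exact this
  have hF := memLp_two_lintegral hf
  calc _ ≤ ∫⁻ z, (∫⁻ w, ENNReal.ofReal (D.g L (w - z)) * ‖tw ω Φ f w‖ₑ) ^ 2 := by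
        refine lintegral_mono fun z => ?_
        have := D.P_le hω f z
        gcongr
    _ ≤ _ := schur (fun w => ENNReal.ofReal (D.g L w)) (fun w => ‖tw ω Φ f w‖ₑ)
        (D.g_cont L).measurable.ennreal_ofReal (D.tw_meas hω hfm).enorm
    _ < ⊤ := ENNReal.mul_lt_top hG (ENNReal.mul_lt_top hG hF)

lemma Dat.fub_int (D : Dat Φ) (L : ℝ) {a b : (Fin n → ℂ) → ℂ} (ham : Measurable a) (hbm : Measurable b)
    (ha : MemLp a 2) (hb : MemLp b 2) :
    Integrable (fun p : (Fin n → ℂ) × (Fin n → ℂ) => D.g L (p.1 - p.2) * (‖a p.1‖ * ‖b p.2‖)) := by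
  have hgm := (D.g_cont L).measurable
  have h1 : Integrable (fun p : (Fin n → ℂ) × (Fin n → ℂ) => D.g L (p.1 - p.2) * ‖a p.1‖ ^ 2) := by
    rw [Measure.volume_eq_prod, integrable_prod_iff (by fun_prop)]
    constructor
    · refine Filter.Eventually.of_forall fun z => ?_
      exact ((D.g_int L).comp_sub_left z).mul_const (‖a z‖ ^ 2)
    · have h2 : ∀ z, ∫ w, ‖D.g L (z - w) * ‖a z‖ ^ 2‖ = (∫ w, D.g L w) * ‖a z‖ ^ 2 := by
        intro z
        rw [← integral_sub_left_eq_self (D.g L) volume z, ← integral_mul_const]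
        congr 1
        ext w
        rw [Real.norm_of_nonneg (mul_nonneg (D.g_nonneg _ _) (by positivity))]
      simp only [h2]
      exact ((memLp_two_iff_integrable_sq_norm ha.1).1 ha).const_mul _
  have h3 : Integrable (fun p : (Fin n → ℂ) × (Fin n → ℂ) => D.g L (p.1 - p.2) * ‖b p.2‖ ^ 2) := by
    rw [Measure.volume_eq_prod, integrable_prod_iff' (by fun_prop)]
    constructor
    · refine Filter.Eventually.of_forall fun z => ?_
      exact ((D.g_int L).comp_sub_right z).mul_const (‖b z‖ ^ 2)
    · have h2 : ∀ w, ∫ z, ‖D.g L (z - w) * ‖b w‖ ^ 2‖ = (∫ w, D.g L w) * ‖b w‖ ^ 2 := by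
        intro w
        rw [← integral_sub_right_eq_self (D.g L) w, ← integral_mul_const]
        congr 1
        ext z
        rw [Real.norm_of_nonneg (mul_nonneg (D.g_nonneg _ _) (by positivity))]
      simp only [h2]
      exact ((memLp_two_iff_integrable_sq_norm hb.1).1 hb).const_mul _
  refine (h1.add h3).mono' (by fun_prop) (Filter.Eventually.of_forall fun p => ?_)
  have := D.g_nonneg L (p.1 - p.2)
  rw [Real.norm_of_nonneg (by positivity)]
  simp only [Pi.add_apply]
  rw [← mul_add]
  gcongr
  nlinarith [sq_nonneg (‖a p.1‖ - ‖b p.2‖), sq_nonneg (‖a p.1‖), sq_nonneg ‖b p.2‖]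

lemma Dat.pair_P (D : Dat Φ) {ω : (Fin n → ℂ) → ℝ} {L : ℝ} (hω : Wt ω L) {u f : (Fin n → ℂ) → ℂ}
    (hud : Differentiable ℂ u) (hu : MemLp (tw (fun z => (ω z)⁻¹) Φ u) 2)
    (hfm : Measurable f) (hf : MemLp (tw ω Φ f) 2) :
    pairΦ Φ u (D.P f) = pairΦ Φ u f := by
  set H : (Fin n → ℂ) → (Fin n → ℂ) → ℂ := fun z w =>
    u z * (starRingEnd ℂ) (D.k z w * f w * (Real.exp (-2 * Φ w) : ℂ)) * (Real.exp (-2 * Φ z) : ℂ)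
    with hH
  have hum := hud.continuous.measurable
  have hkm := D.k_cont.measurable
  have hΦm := D.Φ_cont.measurable
  have hcm := Complex.continuous_conj.measurable
  have hHm : Measurable (Function.uncurry H) := by
    simp only [hH, Function.uncurry_def]
    refine ((hum.comp measurable_fst).mul (hcm.comp ((hkm.mul (hfm.comp measurable_snd)).mul ?_))).mul ?_
    · fun_prop
    · fun_prop
  have hHi : Integrable (Function.uncurry H) (volume.prod volume) := by
    refine (D.fub_int L (D.tw_meas hω.inv hum) (D.tw_meas hω hfm) hu hf).mono'
      hHm.aestronglyMeasurable (Filter.Eventually.of_forall fun p => ?_)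
    obtain ⟨z, w⟩ := p
    simp only [Function.uncurry_apply_pair, hH]
    rw [tw_norm hω, tw_norm hω.inv, norm_mul, norm_mul, RCLike.norm_conj, norm_mul, norm_mul,
      Complex.norm_real, Complex.norm_real, Real.norm_of_nonneg (Real.exp_pos _).le,
      Real.norm_of_nonneg (Real.exp_pos _).le]
    have h2 := D.k_le hω z w
    have h3 : ∀ w, Real.exp (-2 * Φ w) = Real.exp (-Φ w) * Real.exp (-Φ w) := fun w => by
      rw [← Real.exp_add]; ring_nf
    have h4 : Real.exp (Φ w) * Real.exp (-Φ w) = 1 := by rw [← Real.exp_add]; simp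
    have hz := hω.pos z
    have hw := hω.pos w
    calc _ = (‖D.k z w‖ * (ω z * Real.exp (-Φ z))) *
          (‖u z‖ * ((ω z)⁻¹ * Real.exp (-Φ z)) * (‖f w‖ * (Real.exp (-Φ w) * Real.exp (-Φ w)))) := by
          rw [h3, h3]; field_simp
      _ ≤ (D.g L (z - w) * (ω w * Real.exp (Φ w))) *
          (‖u z‖ * ((ω z)⁻¹ * Real.exp (-Φ z)) * (‖f w‖ * (Real.exp (-Φ w) * Real.exp (-Φ w)))) := by
          gcongr
      _ = D.g L (z - w) * (‖u z‖ * ((ω z)⁻¹ * Real.exp (-Φ z)) *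
          (‖f w‖ * (ω w * Real.exp (-Φ w)))) * (Real.exp (Φ w) * Real.exp (-Φ w)) := by ring
      _ = _ := by rw [h4, mul_one]
  have hswap := integral_integral_swap hHi
  have hl : ∀ z, ∫ w, H z w = u z * (starRingEnd ℂ) (D.P f z) * (Real.exp (-2 * Φ z) : ℂ) := by
    intro z
    simp only [hH]
    rw [integral_mul_const, integral_const_mul, integral_conj]
    rfl
  have hr : ∀ w, ∫ z, H z w = u w * (starRingEnd ℂ) (f w) * (Real.exp (-2 * Φ w) : ℂ) := by
    intro w
    have h1 : ∀ z, H z w = ((starRingEnd ℂ) (f w) * (Real.exp (-2 * Φ w) : ℂ)) *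
        (D.k w z * u z * (Real.exp (-2 * Φ z) : ℂ)) := by
      intro z
      simp only [hH, map_mul, D.k_symm, Complex.conj_ofReal]
      ring
    simp only [h1]
    rw [integral_const_mul, D.repro hω.inv hud hu w]
    ring
  simp only [hl, hr] at hswap
  exact hswap

end part3

section part4
variable {n : ℕ} {Φ : (Fin n → ℂ) → ℝ}

lemma hnorm_eq (s : ℝ) (u : (Fin n → ℂ) → ℂ) :
    hnorm Φ s u = ∫⁻ z, ‖tw (fun z => jb z ^ s) Φ u z‖ₑ ^ 2 := by
  unfold hnorm
  refine lintegral_congr fun z => ?_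
  have h := jb_pos z
  rw [← ofReal_norm, tw_norm (jb_wt s), ENNReal.ofReal_mul (norm_nonneg _), mul_pow,
    ofReal_norm, enorm_eq_nnnorm, ← ENNReal.ofReal_pow (by positivity), mul_pow,
    ← Real.rpow_natCast, ← Real.rpow_mul h.le, ← Real.exp_nat_mul]
  congr 3
  · push_cast; ring_nf
  · push_cast; ring_nf

lemma Dat.memH_memLp (D : Dat Φ) {s : ℝ} {u : (Fin n → ℂ) → ℂ} (hu : memH Φ s u) :
    MemLp (tw (fun z => jb z ^ s) Φ u) 2 :=
  memLp_two_of_lintegral (D.tw_cont (jb_wt s) hu.1.continuous).aestronglyMeasurable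
    (by rw [← hnorm_eq]; exact hu.2)

lemma Dat.memH_of (_D : Dat Φ) {s : ℝ} {u : (Fin n → ℂ) → ℂ} (hd : Differentiable ℂ u)
    (hu : MemLp (tw (fun z => jb z ^ s) Φ u) 2) : memH Φ s u :=
  ⟨hd, by rw [hnorm_eq]; exact memLp_two_lintegral hu⟩

lemma sqrt_hnorm {s : ℝ} {u : (Fin n → ℂ) → ℂ} (hu : MemLp (tw (fun z => jb z ^ s) Φ u) 2) :
    Real.sqrt (hnorm Φ s u).toReal = ‖hu.toLp _‖ := by
  rw [Lp.norm_toLp, hnorm_eq]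
  have h := eLpNorm_nnreal_pow_eq_lintegral (μ := volume) (f := tw (fun z => jb z ^ s) Φ u)
    (p := 2) (by norm_num)
  have h2 : eLpNorm (tw (fun z => jb z ^ s) Φ u) 2 volume ^ 2 =
      ∫⁻ z, ‖tw (fun z => jb z ^ s) Φ u z‖ₑ ^ 2 := by
    simpa using h
  rw [← h2, ENNReal.toReal_pow, Real.sqrt_sq ENNReal.toReal_nonneg]

lemma pair_inner {ω : (Fin n → ℂ) → ℝ} {L : ℝ} (hω : Wt ω L) {u v : (Fin n → ℂ) → ℂ}
    (hu : MemLp (tw ω Φ u) 2) (hv : MemLp (tw (fun z => (ω z)⁻¹) Φ v) 2) :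
    pairΦ Φ u v = inner ℂ (hv.toLp _) (hu.toLp _) := by
  unfold pairΦ
  simp only [tw_mul hω]
  rw [L2.inner_def]
  refine integral_congr_ae ?_
  filter_upwards [hu.coeFn_toLp, hv.coeFn_toLp] with z h1 h2
  rw [h1, h2]

lemma tw_add (ω : (Fin n → ℂ) → ℝ) (u v : (Fin n → ℂ) → ℂ) :
    tw ω Φ (u + v) = tw ω Φ u + tw ω Φ v := by
  ext z; simp [tw, add_mul]

lemma tw_smul (ω : (Fin n → ℂ) → ℝ) (c : ℂ) (u : (Fin n → ℂ) → ℂ) :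
    tw ω Φ (c • u) = c • tw ω Φ u := by
  ext z; simp [tw, mul_assoc]

/-- `H^s_Φ` as a submodule of functions. -/
def Dat.sub (D : Dat Φ) (s : ℝ) : Submodule ℂ ((Fin n → ℂ) → ℂ) where
  carrier := {u | memH Φ s u}
  add_mem' := fun {u v} hu hv => D.memH_of (hu.1.add hv.1) (by
    rw [tw_add]; exact (D.memH_memLp hu).add (D.memH_memLp hv))
  zero_mem' := D.memH_of (differentiable_const 0) (by
    have : tw (fun z => jb z ^ s) Φ 0 = 0 := by ext z; simp [tw]
    rw [this]; exact MemLp.zero)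
  smul_mem' := fun c u hu => D.memH_of (hu.1.const_smul c) (by
    rw [tw_smul]; exact (D.memH_memLp hu).const_smul c)

def Dat.emb (D : Dat Φ) (s : ℝ) : D.sub s →ₗ[ℂ] Lp (α := Fin n → ℂ) ℂ 2 volume where
  toFun u := (D.memH_memLp u.2).toLp _
  map_add' u v := by
    rw [← MemLp.toLp_add]
    congr 1
    exact tw_add _ _ _
  map_smul' c u := by
    rw [RingHom.id_apply, ← MemLp.toLp_const_smul]
    congr 1
    exact tw_smul _ _ _

lemma Dat.emb_inj (D : Dat Φ) (s : ℝ) : Function.Injective (D.emb s) := by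
  intro u v huv
  have h1 : tw (fun z => jb z ^ s) Φ u.1 =ᵐ[volume] tw (fun z => jb z ^ s) Φ v.1 :=
    (MemLp.toLp_eq_toLp_iff (D.memH_memLp u.2) (D.memH_memLp v.2)).1 huv
  have h2 := (Continuous.ae_eq_iff_eq volume (D.tw_cont (jb_wt s) u.2.1.continuous)
    (D.tw_cont (jb_wt s) v.2.1.continuous)).1 h1
  ext z
  have h3 := congrFun h2 z
  simp only [tw] at h3
  refine mul_right_cancel₀ ?_ h3
  have := jb_pos z
  exact_mod_cast (by positivity : jb z ^ s * Real.exp (-Φ z) ≠ 0)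

lemma Dat.riesz (D : Dat Φ) (s : ℝ) (ψ : ((Fin n → ℂ) → ℂ) → ℂ)
    (hadd : ∀ u₁ u₂ : (Fin n → ℂ) → ℂ, memH Φ s u₁ → memH Φ s u₂ → ψ (u₁ + u₂) = ψ u₁ + ψ u₂)
    (hsmul : ∀ (c : ℂ) (u : (Fin n → ℂ) → ℂ), memH Φ s u → ψ (c • u) = c * ψ u)
    (K : ℝ) (hK : ∀ u : (Fin n → ℂ) → ℂ, memH Φ s u → ‖ψ u‖ ≤ K * Real.sqrt (hnorm Φ s u).toReal) :
    ∃ b : Lp (α := Fin n → ℂ) ℂ 2 volume, ∀ u, memH Φ s u →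
      ∀ hu : MemLp (tw (fun z => jb z ^ s) Φ u) 2, ψ u = inner ℂ b (hu.toLp _) := by
  let ψ' : D.sub s →ₗ[ℂ] ℂ :=
    { toFun := fun u => ψ u.1
      map_add' := fun u v => hadd u.1 v.1 u.2 v.2
      map_smul' := fun c u => hsmul c u.1 u.2 }
  let e := LinearEquiv.ofInjective (D.emb s) (D.emb_inj s)
  let φ : LinearMap.range (D.emb s) →L[ℂ] ℂ := (ψ'.comp e.symm.toLinearMap).mkContinuous K (by
    intro x
    obtain ⟨u, rfl⟩ := e.surjective x
    have h1 : ‖e u‖ = Real.sqrt (hnorm Φ s u.1).toReal := by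
      rw [sqrt_hnorm (D.memH_memLp u.2)]; rfl
    rw [h1]
    simp only [LinearMap.comp_apply, LinearEquiv.coe_coe, LinearEquiv.symm_apply_apply]
    exact hK u.1 u.2)
  obtain ⟨g, hg, -⟩ := exists_extension_norm_eq (LinearMap.range (D.emb s)) φ
  refine ⟨(InnerProductSpace.toDual ℂ _).symm g, fun u hu huL => ?_⟩
  rw [InnerProductSpace.toDual_symm_apply]
  have h1 := hg (e ⟨u, hu⟩)
  have h2 : φ (e ⟨u, hu⟩) = ψ u := by
    change ψ' (e.symm (e ⟨u, hu⟩)) = ψ u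
    rw [e.symm_apply_apply]
    rfl
  rw [← h2, ← h1]
  rfl

end part4

/-- For a strictly plurisubharmonic quadratic form `Φ` on `ℂⁿ` and `s ∈ ℝ`:
for every `v ∈ H^{-s}_Φ`, the pairing `ψ_v(u) = ∫ u conj(v) e^{-2Φ}` is a bounded
(conjugate-)linear functional on `H^s_Φ` with `|ψ_v(u)| ≤ ‖v‖_{-s}‖u‖_s`; the map `v ↦ ψ_v`
is conjugate-linear, injective, and onto the continuous dual of `H^s_Φ`. -/
theorem stmt_6 (n : ℕ) (hn : 1 ≤ n) (Φ : (Fin n → ℂ) → ℝ) (hΦ : IsSPSH Φ) (s : ℝ) :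
    -- norm bound `‖ψ_v‖ ≤ ‖v‖_{-s}`
    (∀ v : (Fin n → ℂ) → ℂ, memH Φ (-s) v → ∀ u : (Fin n → ℂ) → ℂ, memH Φ s u →
        ‖pairΦ Φ u v‖ ≤ Real.sqrt (hnorm Φ (-s) v).toReal * Real.sqrt (hnorm Φ s u).toReal) ∧
    -- conjugate-linearity of `v ↦ ψ_v`
    (∀ v₁ v₂ u : (Fin n → ℂ) → ℂ, memH Φ (-s) v₁ → memH Φ (-s) v₂ → memH Φ s u →
        pairΦ Φ u (v₁ + v₂) = pairΦ Φ u v₁ + pairΦ Φ u v₂) ∧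
    (∀ (c : ℂ) (v u : (Fin n → ℂ) → ℂ), memH Φ (-s) v → memH Φ s u →
        pairΦ Φ u (c • v) = (starRingEnd ℂ) c * pairΦ Φ u v) ∧
    -- injectivity
    (∀ v₁ v₂ : (Fin n → ℂ) → ℂ, memH Φ (-s) v₁ → memH Φ (-s) v₂ →
        (∀ u : (Fin n → ℂ) → ℂ, memH Φ s u → pairΦ Φ u v₁ = pairΦ Φ u v₂) → v₁ = v₂) ∧
    -- surjectivity onto the continuous dual of `H^s_Φ`
    (∀ ψ : ((Fin n → ℂ) → ℂ) → ℂ,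
        (∀ u₁ u₂ : (Fin n → ℂ) → ℂ, memH Φ s u₁ → memH Φ s u₂ →
            ψ (u₁ + u₂) = ψ u₁ + ψ u₂) →
        (∀ (c : ℂ) (u : (Fin n → ℂ) → ℂ), memH Φ s u → ψ (c • u) = c * ψ u) →
        (∃ K : ℝ, ∀ u : (Fin n → ℂ) → ℂ, memH Φ s u →
            ‖ψ u‖ ≤ K * Real.sqrt (hnorm Φ s u).toReal) →
        ∃ v : (Fin n → ℂ) → ℂ, memH Φ (-s) v ∧
          ∀ u : (Fin n → ℂ) → ℂ, memH Φ s u → ψ u = pairΦ Φ u v) := by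
  obtain ⟨D⟩ := exists_dat Φ hΦ
  have hω := jb_wt (n := n) s
  have hneg : (fun z : Fin n → ℂ => jb z ^ (-s)) = fun z => (jb z ^ s)⁻¹ := by
    ext z; rw [Real.rpow_neg (jb_pos z).le]
  have hm : ∀ u, memH Φ s u → MemLp (tw (fun z => jb z ^ s) Φ u) 2 := fun u hu => D.memH_memLp hu
  have hm' : ∀ u, memH Φ (-s) u → MemLp (tw (fun z => (jb z ^ s)⁻¹) Φ u) 2 := fun u hu => by
    have := D.memH_memLp hu
    rwa [hneg] at this
  refine ⟨?_, ?_, ?_, ?_, ?_⟩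
  · intro v hv u hu
    rw [sqrt_hnorm (D.memH_memLp hv), sqrt_hnorm (D.memH_memLp hu)]
    refine le_trans (le_of_eq ?_) (norm_inner_le_norm (𝕜 := ℂ) _ _)
    rw [pair_inner hω (hm u hu) (hm' v hv)]
    have h1 : (hm' v hv).toLp _ = (D.memH_memLp hv).toLp _ :=
      MemLp.toLp_congr _ _ (by rw [hneg])
    rw [h1]
  · intro v₁ v₂ u h1 h2 hu
    unfold pairΦ
    rw [← integral_add (pair_int hω (hm u hu) (hm' _ h1)) (pair_int hω (hm u hu) (hm' _ h2))]
    congr 1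
    ext z
    simp only [Pi.add_apply, map_add]
    ring
  · intro c v u _ _
    unfold pairΦ
    rw [← integral_const_mul]
    congr 1
    ext z
    simp only [Pi.smul_apply, smul_eq_mul, map_mul]
    ring
  · intro v₁ v₂ h1 h2 h
    ext z
    have hk : memH Φ s (fun w => D.k w z) := D.memH_of (D.k_diff z) (D.k_memLp hω z)
    have key : ∀ v, memH Φ (-s) v → (starRingEnd ℂ) (pairΦ Φ (fun w => D.k w z) v) = v z := by
      intro v hv
      rw [← D.repro hω.inv hv.1 (hm' v hv) z]
      unfold pairΦ
      rw [← integral_conj]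
      congr 1
      ext w
      simp only [map_mul, D.k_symm, Complex.conj_conj, Complex.conj_ofReal]
    rw [← key v₁ h1, ← key v₂ h2, h _ hk]
  · rintro ψ hadd hsmul ⟨K, hK⟩
    obtain ⟨b, hb⟩ := D.riesz s ψ hadd hsmul K hK
    have hbm : Measurable b := (Lp.stronglyMeasurable b).measurable
    set f : (Fin n → ℂ) → ℂ := fun z => b z * ((jb z ^ s * Real.exp (Φ z) : ℝ) : ℂ) with hf
    have hfm : Measurable f := by
      have h1 := hω.cont.measurable
      have h2 := D.Φ_cont.measurable
      exact hbm.mul (Complex.measurable_ofReal.comp (h1.mul (Real.measurable_exp.comp h2)))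
    have htf : tw (fun z => (jb z ^ s)⁻¹) Φ f = b := by
      ext z
      have h3 : ((jb z ^ s * Real.exp (Φ z)) * ((jb z ^ s)⁻¹ * Real.exp (-Φ z)) : ℝ) = 1 := by
        have := hω.pos z
        rw [Real.exp_neg]
        field_simp
      simp only [tw, hf]
      rw [mul_assoc, ← Complex.ofReal_mul, h3]
      simp
    have hfL : MemLp (tw (fun z => (jb z ^ s)⁻¹) Φ f) 2 := by
      rw [htf]; exact Lp.memLp b
    refine ⟨D.P f, D.memH_of (D.P_diff hω.inv hfm hfL) ?_, ?_⟩
    · rw [hneg]; exact D.P_memLp hω.inv hfm hfL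
    · intro u hu
      have huL : MemLp (tw (fun z => ((jb z ^ s)⁻¹)⁻¹) Φ u) 2 := by
        simpa only [inv_inv] using hm u hu
      rw [D.pair_P hω.inv hu.1 huL hfm hfL, hb u hu (hm u hu), pair_inner hω (hm u hu) hfL]
      congr 1
      rw [Lp.ext_iff]
      filter_upwards [hfL.coeFn_toLp] with z hz
      rw [hz, htf]
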